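/- Suppose (D,g) satisfies the Codazzi equation and (D,g) is of constant curvature c, i.e. R^m_{kij} = c(g_{jk} δ^m_i − g_{ik} δ^m_j) for all i,j,k,m at every point of U. Then the dual pair (D',g) is also of constant curvature c: R'^m_{kij} = c(g_{jk} δ^m_i − g_{ik} δ^m_j) for all i,j,k,m at every point of U. -/

import Mathlib

/-!
Write `G = (g_{ij})`, `A_i = (Γ^m_{ik})_{m,k}` and `A'_i` for the connection matrices of `D` and `D'`.
The defining relation of the dual connection is `G A'_i = ∂_i G - A_iᵀ G`. Differentiating it,
antisymmetrizing in the two indices and using `∂_i ∂_j G = ∂_j ∂_i G` gives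
`G R'_{ij} = - R_{ij}ᵀ G` (`dual_curvature_matrix`), where
`R_{ij} = ∂_i A_j - ∂_j A_i + A_i A_j - A_j A_i`.
For `R` of constant curvature `c`, the right-hand side is
`c (g_{ni} g_{jk} - g_{nj} g_{ik})`, which is `G` times the constant curvature tensor;
cancelling the invertible matrix `G` finishes the proof.
-/

/-- Partial derivative in the `i`-th coordinate direction. -/
noncomputable def pd {q : ℕ} (i : Fin q) (f : (Fin q → ℝ) → ℝ) (y : Fin q → ℝ) : ℝ :=
  fderiv ℝ f y (Pi.single i 1)

/-- Entries `g^{ij}` of the inverse matrix of `g(y)`. -/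
noncomputable def ginv {q : ℕ} (g : (Fin q → ℝ) → Fin q → Fin q → ℝ)
    (y : Fin q → ℝ) (i j : Fin q) : ℝ :=
  (Matrix.of (g y))⁻¹ i j

/-- Christoffel symbols `Γ̂^i_{jk}` of the Levi-Civita connection of `g`. -/
noncomputable def lc {q : ℕ} (g : (Fin q → ℝ) → Fin q → Fin q → ℝ)
    (i j k : Fin q) (y : Fin q → ℝ) : ℝ :=
  (1 / 2) * ∑ s, ginv g y i s *
    (pd k (fun z => g z s j) y + pd j (fun z => g z s k) y - pd s (fun z => g z j k) y)

/-- Christoffel symbols `Γ'^m_{ik} = Σ_j g^{mj}(∂g_{jk}/∂y^i − Σ_l Γ^l_{ij} g_{lk})` of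
the dual connection `D'` of `D` with respect to `g`. -/
noncomputable def dualGamma {q : ℕ} (g : (Fin q → ℝ) → Fin q → Fin q → ℝ)
    (Γ : Fin q → Fin q → Fin q → (Fin q → ℝ) → ℝ) (m i k : Fin q) (y : Fin q → ℝ) : ℝ :=
  ∑ j, ginv g y m j * (pd i (fun z => g z j k) y - ∑ l, Γ l i j y * g y l k)

/-- `(Dg)_{i;jk} = ∂g_{jk}/∂y^i − Σ_l Γ^l_{ij} g_{lk} − Σ_l Γ^l_{ik} g_{jl}`. -/
noncomputable def Dg {q : ℕ} (g : (Fin q → ℝ) → Fin q → Fin q → ℝ)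
    (Γ : Fin q → Fin q → Fin q → (Fin q → ℝ) → ℝ) (i j k : Fin q) (y : Fin q → ℝ) : ℝ :=
  pd i (fun z => g z j k) y - (∑ l, Γ l i j y * g y l k) - ∑ l, Γ l i k y * g y j l

/-- Curvature tensor `R^m_{kij}` of the connection with Christoffel symbols `Γ`,
corresponding to `R(e_i,e_j)e_k = Σ_m R^m_{kij} e_m`. -/
noncomputable def curv {q : ℕ} (Γ : Fin q → Fin q → Fin q → (Fin q → ℝ) → ℝ)
    (m k i j : Fin q) (y : Fin q → ℝ) : ℝ :=
  pd i (Γ m j k) y - pd j (Γ m i k) y +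
    ∑ r, (Γ m i r y * Γ r j k y - Γ m j r y * Γ r i k y)

open scoped Matrix

section PartialDerivatives

variable {q : ℕ} {f h : (Fin q → ℝ) → ℝ} {y : Fin q → ℝ}

lemma pd_mul (i : Fin q) (hf : DifferentiableAt ℝ f y) (hh : DifferentiableAt ℝ h y) :
    pd i (fun z => f z * h z) y = pd i f y * h y + f y * pd i h y := by
  unfold pd
  rw [fderiv_fun_mul hf hh]
  simp
  ring

lemma pd_sub (i : Fin q) (hf : DifferentiableAt ℝ f y) (hh : DifferentiableAt ℝ h y) :
    pd i (fun z => f z - h z) y = pd i f y - pd i h y := by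
  unfold pd
  rw [fderiv_fun_sub hf hh]
  simp

lemma pd_sum (i : Fin q) {F : Fin q → (Fin q → ℝ) → ℝ}
    (hF : ∀ l, DifferentiableAt ℝ (F l) y) :
    pd i (fun z => ∑ l, F l z) y = ∑ l, pd i (F l) y := by
  unfold pd
  rw [fderiv_fun_sum (fun l _ => hF l)]
  simp

lemma pd_sum_mul (i : Fin q) {F H : Fin q → (Fin q → ℝ) → ℝ}
    (hF : ∀ l, DifferentiableAt ℝ (F l) y) (hH : ∀ l, DifferentiableAt ℝ (H l) y) :
    pd i (fun z => ∑ l, F l z * H l z) y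
      = ∑ l, pd i (F l) y * H l y + ∑ l, F l y * pd i (H l) y := by
  rw [pd_sum i (fun l => (hF l).fun_mul (hH l)), ← Finset.sum_add_distrib]
  exact Finset.sum_congr rfl fun l _ => pd_mul i (hF l) (hH l)

lemma pd_congr (i : Fin q) (hfh : f =ᶠ[nhds y] h) : pd i f y = pd i h y := by
  unfold pd
  rw [hfh.fderiv_eq]

lemma differentiableAt_pd (i : Fin q) (hf : ContDiffAt ℝ 2 f y) :
    DifferentiableAt ℝ (pd i f) y := by
  have h1 : DifferentiableAt ℝ (fderiv ℝ f) y :=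
    (hf.fderiv_right (m := 1) (by norm_num)).differentiableAt (by norm_num)
  exact h1.clm_apply (differentiableAt_const _)

lemma pd_comm (i j : Fin q) (hf : ContDiffAt ℝ 2 f y) :
    pd i (pd j f) y = pd j (pd i f) y := by
  have h1 : DifferentiableAt ℝ (fderiv ℝ f) y :=
    (hf.fderiv_right (m := 1) (by norm_num)).differentiableAt (by norm_num)
  have key : ∀ a b : Fin q, pd a (pd b f) y
      = fderiv ℝ (fderiv ℝ f) y (Pi.single a 1) (Pi.single b 1) := by
    intro a b
    change fderiv ℝ (fun z => fderiv ℝ f z (Pi.single b 1)) y (Pi.single a 1) = _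
    rw [fderiv_clm_apply h1 (differentiableAt_const _)]
    simp
  rw [key, key]
  exact (hf.isSymmSndFDerivAt (by simp)).eq _ _

lemma differentiableAt_det {M : (Fin q → ℝ) → Matrix (Fin q) (Fin q) ℝ}
    (hM : ∀ i j, DifferentiableAt ℝ (fun z => M z i j) y) :
    DifferentiableAt ℝ (fun z => (M z).det) y := by
  simp only [Matrix.det_apply']
  fun_prop

lemma differentiableAt_ginv {g : (Fin q → ℝ) → Fin q → Fin q → ℝ}
    (hg : ∀ i j, DifferentiableAt ℝ (fun z => g z i j) y)
    (hdet : (Matrix.of (g y)).det ≠ 0) (i j : Fin q) :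
    DifferentiableAt ℝ (fun z => ginv g z i j) y := by
  have hadj : DifferentiableAt ℝ (fun z => (Matrix.of (g z)).adjugate i j) y := by
    simp only [Matrix.adjugate_apply]
    refine differentiableAt_det fun a b => ?_
    by_cases ha : a = j
    · subst ha
      simp
    · simpa [Matrix.updateRow_ne ha] using hg a b
  have hd : DifferentiableAt ℝ (fun z => (Matrix.of (g z)).det) y := differentiableAt_det hg
  have h : DifferentiableAt ℝ
      (fun z => (Matrix.of (g z)).det⁻¹ * (Matrix.of (g z)).adjugate i j) y :=
    (hd.inv hdet).mul hadj
  simpa [ginv, Matrix.inv_def, Ring.inverse_eq_inv'] using h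

end PartialDerivatives

/-- Matrix form of `G R'_{ij} = - R_{ij}ᵀ G`. Here `dGi, dGj` are the derivatives of `G`, `ddG` is
the mixed second derivative, `Ai, Aj` and `Bi, Bj` are the connection matrices of `D` and `D'`, and
`dij` (`eij`) stands for the `i`-th derivative of `Aj` (`Bj`), likewise `dji`, `eji`.
The last two hypotheses are the derivatives of the duality relation. -/
lemma dual_curvature_matrix {n : Type*} [Fintype n]
    {G dGi dGj ddG Ai Aj Bi Bj dij dji eij eji : Matrix n n ℝ}
    (hi : G * Bi = dGi - Aiᵀ * G) (hj : G * Bj = dGj - Ajᵀ * G)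
    (hij : dGi * Bj + G * eij = ddG - (dijᵀ * G + Ajᵀ * dGi))
    (hji : dGj * Bi + G * eji = ddG - (djiᵀ * G + Aiᵀ * dGj)) :
    G * (eij - eji + (Bi * Bj - Bj * Bi)) = -((dij - dji + (Ai * Aj - Aj * Ai))ᵀ * G) := by
  have h1 : G * Bi * Bj = dGi * Bj - Aiᵀ * (dGj - Ajᵀ * G) := by
    rw [hi, ← hj]; noncomm_ring
  have h2 : G * Bj * Bi = dGj * Bi - Ajᵀ * (dGi - Aiᵀ * G) := by
    rw [hj, ← hi]; noncomm_ring
  have h3 : G * eij = ddG - (dijᵀ * G + Ajᵀ * dGi) - dGi * Bj := by rw [← hij]; abel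
  have h4 : G * eji = ddG - (djiᵀ * G + Aiᵀ * dGj) - dGj * Bi := by rw [← hji]; abel
  have h5 : G * (eij - eji + (Bi * Bj - Bj * Bi))
      = G * eij - G * eji + (G * Bi * Bj - G * Bj * Bi) := by noncomm_ring
  rw [h5, h1, h2, h3, h4]
  simp only [Matrix.transpose_add, Matrix.transpose_sub, Matrix.transpose_mul]
  noncomm_ring

/-- Defining relation of the dual connection with the inverse metric cleared:
`Σ_m g_{nm} Γ'^m_{ik} = ∂_i g_{nk} - Σ_l Γ^l_{in} g_{lk}`. -/
lemma sum_g_mul_dualGamma {q : ℕ} {g : (Fin q → ℝ) → Fin q → Fin q → ℝ}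
    (Γ : Fin q → Fin q → Fin q → (Fin q → ℝ) → ℝ) {y : Fin q → ℝ}
    (hdet : IsUnit (Matrix.of (g y)).det) (i n k : Fin q) :
    ∑ m, g y n m * dualGamma g Γ m i k y
      = pd i (fun z => g z n k) y - ∑ l, Γ l i n y * g y l k := by
  have h := congrFun (congrArg (fun M => M *ᵥ
    (fun j => pd i (fun z => g z j k) y - ∑ l, Γ l i j y * g y l k))
    (Matrix.mul_nonsing_inv _ hdet)) n
  simp only [← Matrix.mulVec_mulVec, Matrix.one_mulVec] at h
  simpa only [Matrix.mulVec, dotProduct, Matrix.of_apply, dualGamma, ginv] using h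

/-- if `(D,g)` is a Codazzi structure of constant curvature `c`, then so
is its dual `(D',g)`. -/
theorem dual_constant_curvature
    {q : ℕ} (U : Set (Fin q → ℝ)) (hU : IsOpen U)
    (g : (Fin q → ℝ) → Fin q → Fin q → ℝ)
    (hg : ∀ i j, ContDiffOn ℝ (⊤ : ℕ∞) (fun y => g y i j) U)
    (hposdef : ∀ y ∈ U, (Matrix.of (g y)).PosDef)
    (Γ : Fin q → Fin q → Fin q → (Fin q → ℝ) → ℝ)
    (hΓ : ∀ k i j, ContDiffOn ℝ (⊤ : ℕ∞) (Γ k i j) U)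
    (hΓsym : ∀ y ∈ U, ∀ k i j, Γ k i j y = Γ k j i y)
    (hcodazzi : ∀ y ∈ U, ∀ i j k, Dg g Γ i j k y = Dg g Γ j i k y)
    (c : ℝ)
    (hconst : ∀ y ∈ U, ∀ m k i j,
      curv Γ m k i j y
        = c * (g y j k * (if m = i then (1:ℝ) else 0)
            - g y i k * (if m = j then (1:ℝ) else 0))) :
    ∀ y ∈ U, ∀ m k i j,
      curv (dualGamma g Γ) m k i j y
        = c * (g y j k * (if m = i then (1:ℝ) else 0)
            - g y i k * (if m = j then (1:ℝ) else 0)) := by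
  intro y hy m k i j
  have hnhds : U ∈ nhds y := hU.mem_nhds hy
  have hdet : ∀ z ∈ U, IsUnit (Matrix.of (g z)).det :=
    fun z hz => (hposdef z hz).det_pos.ne'.isUnit
  have hg2 : ∀ a b, ContDiffAt ℝ 2 (fun z => g z a b) y := fun a b =>
    ((hg a b).contDiffAt hnhds).of_le (WithTop.coe_le_coe.2 le_top)
  have hgd : ∀ a b, DifferentiableAt ℝ (fun z => g z a b) y := fun a b =>
    (hg2 a b).differentiableAt (by norm_num)
  have hΓd : ∀ l a b, DifferentiableAt ℝ (Γ l a b) y := fun l a b =>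
    ((hΓ l a b).contDiffAt hnhds).differentiableAt (by simp)
  have hsumd : ∀ a n b, DifferentiableAt ℝ (fun z => ∑ l, Γ l a n z * g z l b) y :=
    fun a n b => DifferentiableAt.fun_sum fun l _ => (hΓd l a n).mul (hgd l b)
  have hΓ'd : ∀ l a b, DifferentiableAt ℝ (dualGamma g Γ l a b) y := fun l a b =>
    DifferentiableAt.fun_sum fun n _ =>
      (differentiableAt_ginv hgd (hdet y hy).ne_zero l n).mul
        ((differentiableAt_pd a (hg2 n b)).sub (hsumd a n b))
  have hsymm : ∀ a b, g y a b = g y b a := fun a b => by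
    simpa using (hposdef y hy).isHermitian.apply b a
  -- The duality relation holds throughout `U`, so it may be differentiated at `y`.
  have hderiv : ∀ a b n p,
      ∑ l, pd a (fun z => g z n l) y * dualGamma g Γ l b p y
        + ∑ l, g y n l * pd a (dualGamma g Γ l b p) y
      = pd a (pd b (fun z => g z n p)) y
        - (∑ l, pd a (Γ l b n) y * g y l p + ∑ l, Γ l b n y * pd a (fun z => g z l p) y) := by
    intro a b n p
    rw [← pd_sum_mul a (fun l => hgd n l) (fun l => hΓ'd l b p),
      ← pd_sum_mul a (fun l => hΓd l b n) (fun l => hgd l p),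
      ← pd_sub a (differentiableAt_pd b (hg2 n p)) (hsumd b n p)]
    refine pd_congr a ?_
    filter_upwards [hnhds] with z hz
    exact sum_g_mul_dualGamma Γ (hdet z hz) b n p
  let G : Matrix (Fin q) (Fin q) ℝ := Matrix.of (g y)
  let dG (a : Fin q) : Matrix (Fin q) (Fin q) ℝ :=
    Matrix.of fun n p => pd a (fun z => g z n p) y
  let ddG (a b : Fin q) : Matrix (Fin q) (Fin q) ℝ :=
    Matrix.of fun n p => pd a (pd b (fun z => g z n p)) y
  let A (Δ : Fin q → Fin q → Fin q → (Fin q → ℝ) → ℝ) (a : Fin q) : Matrix (Fin q) (Fin q) ℝ :=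
    Matrix.of fun l p => Δ l a p y
  let dA (Δ : Fin q → Fin q → Fin q → (Fin q → ℝ) → ℝ) (a b : Fin q) :
      Matrix (Fin q) (Fin q) ℝ :=
    Matrix.of fun l p => pd a (Δ l b p) y
  let R (Δ : Fin q → Fin q → Fin q → (Fin q → ℝ) → ℝ) : Matrix (Fin q) (Fin q) ℝ :=
    Matrix.of fun l p => curv Δ l p i j y
  let T : Matrix (Fin q) (Fin q) ℝ :=
    Matrix.of fun l p => c * (g y j p * (if l = i then (1:ℝ) else 0)
      - g y i p * (if l = j then (1:ℝ) else 0))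
  have hR : ∀ Δ, R Δ = dA Δ i j - dA Δ j i + (A Δ i * A Δ j - A Δ j * A Δ i) := by
    intro Δ
    ext l p
    simp [R, dA, A, curv, Matrix.mul_apply, Finset.sum_sub_distrib]
  have hdual : ∀ a, G * A (dualGamma g Γ) a = dG a - (A Γ a)ᵀ * G := by
    intro a
    ext n p
    simpa [G, A, dG, Matrix.mul_apply] using sum_g_mul_dualGamma Γ (hdet y hy) a n p
  have hddual : ∀ a b, dG a * A (dualGamma g Γ) b + G * dA (dualGamma g Γ) a b
      = ddG a b - ((dA Γ a b)ᵀ * G + (A Γ b)ᵀ * dG a) := by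
    intro a b
    ext n p
    simpa [G, A, dG, dA, ddG, Matrix.mul_apply] using hderiv a b n p
  have hcomm : ddG j i = ddG i j := by
    ext n p
    exact pd_comm j i (hg2 n p)
  have hmain : G * R (dualGamma g Γ) = -((R Γ)ᵀ * G) := by
    rw [hR, hR]
    exact dual_curvature_matrix (hdual i) (hdual j) (hddual i j) (hcomm ▸ hddual j i)
  have hRT : R Γ = T := by
    ext l p
    exact hconst y hy l p i j
  have hT : -(Tᵀ * G) = G * T := by
    ext n p
    simp only [Matrix.neg_apply, Matrix.mul_apply, Matrix.transpose_apply, T, G, Matrix.of_apply]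
    simp only [mul_sub, sub_mul, Finset.sum_sub_distrib, mul_ite, ite_mul, mul_one, mul_zero,
      zero_mul, Finset.sum_ite_eq', Finset.mem_univ, if_true]
    rw [hsymm n i, hsymm n j]
    ring
  have hfinal : R (dualGamma g Γ) = T := by
    rw [hRT, hT] at hmain
    exact ((Matrix.isUnit_iff_isUnit_det G).2 (hdet y hy)).mul_left_cancel hmain
  exact congrFun (congrFun hfinal m) k
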